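/- Let X be a geodesic δ-hyperbolic metric space in which all geodesic triangles are δ-thin. Let x_0, x_1, x_2, x_3 be a (C,D)-chain in X with D ≥ 2C + 2δ + 1, and let K ≥ 0. If g : X → X is a surjective isometry with d(x_0, g x_0) ≤ K and d(x_3, g x_3) ≤ K, then d(x_1, g x_1) ≤ 2C + 2K + 12δ and d(x_2, g x_2) ≤ 2C + 2K + 12δ. -/

import Mathlib

/-- Gromov product `(x,y)_z = (d(x,z) + d(y,z) − d(x,y))/2`. -/
noncomputable def gromov {X : Type*} [MetricSpace X] (x y z : X) : ℝ :=
  (dist x z + dist y z - dist x y) / 2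

/-- A metric space is `δ`-hyperbolic if
`(x,y)_o ≥ min((x,z)_o, (y,z)_o) − δ` for all `x, y, z, o`. -/
def IsDeltaHyperbolic (X : Type*) [MetricSpace X] (δ : ℝ) : Prop :=
  ∀ x y z o : X, min (gromov x z o) (gromov y z o) - δ ≤ gromov x y o

/-- `γ : ℝ → X` (restricted to `[0, d(x,y)]`) is a geodesic from `x` to `y`. -/
def IsGeodesicFromTo {X : Type*} [MetricSpace X] (x y : X) (γ : ℝ → X) : Prop :=
  γ 0 = x ∧ γ (dist x y) = y ∧
  ∀ s ∈ Set.Icc (0 : ℝ) (dist x y), ∀ t ∈ Set.Icc (0 : ℝ) (dist x y),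
    dist (γ s) (γ t) = |s - t|

/-- `X` is a geodesic metric space. -/
def IsGeodesicSpace (X : Type*) [MetricSpace X] : Prop :=
  ∀ x y : X, ∃ γ : ℝ → X, IsGeodesicFromTo x y γ

/-- All geodesic triangles of `X` are `δ`-thin: every point on one side lies
within distance `δ` of the union of the other two sides. -/
def ThinTriangles (X : Type*) [MetricSpace X] (δ : ℝ) : Prop :=
  ∀ (x y z : X) (γ₁ γ₂ γ₃ : ℝ → X),
    IsGeodesicFromTo x y γ₁ → IsGeodesicFromTo y z γ₂ → IsGeodesicFromTo x z γ₃ →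
    ∀ p ∈ γ₁ '' Set.Icc (0 : ℝ) (dist x y),
      ∃ q ∈ (γ₂ '' Set.Icc (0 : ℝ) (dist y z)) ∪ (γ₃ '' Set.Icc (0 : ℝ) (dist x z)),
        dist p q ≤ δ

/-!
Applying hyperbolicity to `x₀, x₂, x₃` based at `x₁` gives
`min((x₀,x₃)_{x₁}, (x₂,x₃)_{x₁}) ≤ C + δ`. The second entry equals
`d(x₁,x₂) − (x₁,x₃)_{x₂} ≥ D − C > C + δ`, so `(x₀,x₃)_{x₁} ≤ C + δ`: the point `x₁` lies close to
the line from `x₀` to `x₃`. Now `g x₁` is at most `K` farther from `x₀` and from `x₃` than `x₁` is,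
so `(x₀,g x₁)_{x₁}` and `(x₃,g x₁)_{x₁}` are both at least `(d(x₁,g x₁) − K)/2`. Hyperbolicity
bounds their minimum by `(x₀,x₃)_{x₁} + δ`, hence `d(x₁,g x₁) ≤ 2C + K + 4δ`. Reversing the chain
gives the same bound at `x₂`.
-/

section

variable {X : Type*} [MetricSpace X] {δ K : ℝ}

theorem gromov_comm (x y z : X) : gromov x y z = gromov y x z := by
  rw [gromov, gromov, dist_comm x y, add_comm (dist x z)]

theorem gromov_add_gromov (x y z : X) : gromov x z y + gromov y z x = dist x y := by
  rw [gromov, gromov, dist_comm y x, dist_comm z x, dist_comm z y]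
  ring

namespace IsDeltaHyperbolic

theorem gromov_le_gromov_add_of_lt (hX : IsDeltaHyperbolic X δ) {x₀ x₁ x₂ x₃ : X}
    (h : gromov x₀ x₂ x₁ + gromov x₁ x₃ x₂ + δ < dist x₁ x₂) :
    gromov x₀ x₃ x₁ ≤ gromov x₀ x₂ x₁ + δ := by
  have min_gromov_le : min (gromov x₀ x₃ x₁) (gromov x₂ x₃ x₁) ≤ gromov x₀ x₂ x₁ + δ :=
    sub_le_iff_le_add.mp (hX x₀ x₂ x₃ x₁)
  have lt_gromov : gromov x₀ x₂ x₁ + δ < gromov x₂ x₃ x₁ := by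
    linarith [gromov_add_gromov x₁ x₂ x₃]
  exact (min_le_iff.mp min_gromov_le).resolve_right lt_gromov.not_ge

theorem dist_le_two_mul_gromov_add (hX : IsDeltaHyperbolic X δ) {a b p q : X}
    (ha : dist a q ≤ dist a p + K) (hb : dist b q ≤ dist b p + K) :
    dist p q ≤ 2 * gromov a b p + K + 2 * δ := by
  have le_gromov {c : X} (hc : dist c q ≤ dist c p + K) :
      (dist p q - K) / 2 ≤ gromov c q p := by
    rw [gromov, dist_comm q p]
    linarith
  have le_min_gromov : (dist p q - K) / 2 ≤ min (gromov a q p) (gromov b q p) :=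
    le_min (le_gromov ha) (le_gromov hb)
  linarith [hX a b q p]

theorem dist_apply_le_two_mul_gromov_add (hX : IsDeltaHyperbolic X δ) {a b : X} {g : X → X}
    (hg : LipschitzWith 1 g) (ha : dist a (g a) ≤ K) (hb : dist b (g b) ≤ K) (p : X) :
    dist p (g p) ≤ 2 * gromov a b p + K + 2 * δ := by
  have dist_le {c : X} (hc : dist c (g c) ≤ K) : dist c (g p) ≤ dist c p + K :=
    calc
      dist c (g p) ≤ dist c (g c) + dist (g c) (g p) := dist_triangle ..
      _ ≤ K + dist c p := add_le_add hc (by simpa using hg.dist_le_mul c p)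
      _ = dist c p + K := add_comm ..
  exact hX.dist_le_two_mul_gromov_add (dist_le ha) (dist_le hb)

theorem dist_apply_le_of_chain (hX : IsDeltaHyperbolic X δ) {C : ℝ} {x₀ x₁ x₂ x₃ : X}
    (h₁ : gromov x₀ x₂ x₁ ≤ C) (h₂ : gromov x₁ x₃ x₂ ≤ C) (hd : 2 * C + δ < dist x₁ x₂)
    {g : X → X} (hg : LipschitzWith 1 g)
    (hx₀ : dist x₀ (g x₀) ≤ K) (hx₃ : dist x₃ (g x₃) ≤ K) :
    dist x₁ (g x₁) ≤ 2 * C + K + 4 * δ := by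
  have gromov_le : gromov x₀ x₃ x₁ ≤ gromov x₀ x₂ x₁ + δ :=
    hX.gromov_le_gromov_add_of_lt (by linarith)
  linarith [hX.dist_apply_le_two_mul_gromov_add hg hx₀ hx₃ x₁]

end IsDeltaHyperbolic

theorem statement7_general (hX : IsDeltaHyperbolic X δ) {C : ℝ} {x₀ x₁ x₂ x₃ : X}
    (h₁ : gromov x₀ x₂ x₁ ≤ C) (h₂ : gromov x₁ x₃ x₂ ≤ C) (hd : 2 * C + δ < dist x₁ x₂)
    {g : X → X} (hg : LipschitzWith 1 g)
    (hx₀ : dist x₀ (g x₀) ≤ K) (hx₃ : dist x₃ (g x₃) ≤ K) :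
    dist x₁ (g x₁) ≤ 2 * C + K + 4 * δ ∧ dist x₂ (g x₂) ≤ 2 * C + K + 4 * δ := by
  refine ⟨hX.dist_apply_le_of_chain h₁ h₂ hd hg hx₀ hx₃, ?_⟩
  rw [gromov_comm] at h₁ h₂
  rw [dist_comm] at hd
  exact hX.dist_apply_le_of_chain h₂ h₁ hd hg hx₃ hx₀

end

/-- if `x₀, x₁, x₂, x₃` is a `(C,D)`-chain with `D ≥ 2C + 2δ + 1`
in a geodesic `δ`-hyperbolic space with `δ`-thin triangles, and a surjective
isometry `g` moves `x₀` and `x₃` by at most `K`, then `g` moves `x₁` and `x₂`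
by at most `2C + 2K + 12δ`. -/
theorem statement7 {X : Type*} [MetricSpace X] (δ C D K : ℝ)
    (hδ : 0 ≤ δ) (hC : 0 ≤ C) (hK : 0 ≤ K)
    (hX : IsDeltaHyperbolic X δ) (hgeo : IsGeodesicSpace X)
    (hthin : ThinTriangles X δ)
    (x₀ x₁ x₂ x₃ : X)
    (h₁ : gromov x₀ x₂ x₁ ≤ C) (h₂ : gromov x₁ x₃ x₂ ≤ C)
    (hd₀ : D ≤ dist x₀ x₁) (hd₁ : D ≤ dist x₁ x₂) (hd₂ : D ≤ dist x₂ x₃)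
    (hD : 2 * C + 2 * δ + 1 ≤ D)
    (g : X → X) (hg : Isometry g) (hgsurj : Function.Surjective g)
    (hx₀ : dist x₀ (g x₀) ≤ K) (hx₃ : dist x₃ (g x₃) ≤ K) :
    dist x₁ (g x₁) ≤ 2 * C + 2 * K + 12 * δ ∧
    dist x₂ (g x₂) ≤ 2 * C + 2 * K + 12 * δ := by
  exact (statement7_general hX h₁ h₂ (by linarith) hg.lipschitz hx₀ hx₃).imp
    (fun h => by linarith) (fun h => by linarith)
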